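/- Let d ≥ 2 and let x, y be probability vectors of dimension d with strictly positive entries whose nonincreasing rearrangements are not equal. Then there exists a probability vector c (of some finite dimension) such that x⊗c ≺ y⊗c if and only if f_α(y) > f_α(x) for every real number α, where f_α(v) = ln Σ_i v_i^α for α > 1, f_1(v) = Σ_i v_i ln v_i, f_α(v) = −ln Σ_i v_i^α for 0 < α < 1, f_0(v) = −Σ_i ln v_i, and f_α(v) = ln Σ_i v_i^α for α < 0. -/

import Mathlib

/-- The sum of the `k` largest entries of a vector (equivalently, for vectors with
nonnegative entries, the maximum of `∑ i ∈ s, x i` over subsets `s` of cardinality at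
most `k`; this also accounts for padding with zeros). -/
noncomputable def topSum {ι : Type*} [Fintype ι] [DecidableEq ι] (x : ι → ℝ) (k : ℕ) : ℝ :=
  ((Finset.univ : Finset ι).powerset.filter (fun s => s.card ≤ k)).sup'
    ⟨∅, by simp⟩ (fun s => ∑ i ∈ s, x i)

/-- A probability vector: nonnegative entries summing to 1. -/
def IsProbVec {ι : Type*} [Fintype ι] (x : ι → ℝ) : Prop :=
  (∀ i, 0 ≤ x i) ∧ ∑ i, x i = 1

/-- `x ≺ y` (majorization, after padding with zeros to a common dimension): every partial
sum of the `k` largest entries of `x` is at most that of `y`, with equal total sums. -/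
def PMaj {ι κ : Type*} [Fintype ι] [DecidableEq ι] [Fintype κ] [DecidableEq κ]
    (x : ι → ℝ) (y : κ → ℝ) : Prop :=
  (∀ k : ℕ, topSum x k ≤ topSum y k) ∧ (∑ i, x i = ∑ j, y j)

/-- Tensor product of two vectors: `(x ⊗ y)_{(i,j)} = x_i y_j`. -/
def pvTensor {ι κ : Type*} (x : ι → ℝ) (y : κ → ℝ) : ι × κ → ℝ :=
  fun p => x p.1 * y p.2

/-- The functions `f_α` of Turgut and Klimesh. -/
noncomputable def fAlpha {ι : Type*} [Fintype ι] (α : ℝ) (v : ι → ℝ) : ℝ :=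
  if 1 < α then Real.log (∑ i, v i ^ α)
  else if α = 1 then ∑ i, v i * Real.log (v i)
  else if 0 < α then - Real.log (∑ i, v i ^ α)
  else if α = 0 then - ∑ i, Real.log (v i)
  else Real.log (∑ i, v i ^ α)

/-!
Let `μ` be the counting measure of the entries of `y` minus that of the entries of `x`.
Majorization of `x` by `y` amounts to the nonnegativity of `g u = ∫ (v - exp u)⁺ dμ v` for all `u`.
The function `g` is continuous with compact support, and by Taylor's formula its bilateral Laplace
transform at `β` is the integral against `μ` of a function whose second derivative is
`v ^ (β - 1)`; so that transform is positive exactly when `fAlpha (β + 1) x < fAlpha (β + 1) y`.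
Tensoring with `c` replaces `g` by `∑ j, c j * g (u - log (c j))`, which multiplies the transform at
`β` by `∑ j, c j ^ (β + 1) > 0`. Hence trumping forces the transform of `g` to be positive.

Conversely, if the transform of `g` is positive everywhere, then for a small mesh `ε` all the
lattice sums `∑ k, g (s + k * ε) * exp (β * (s + k * ε))` are positive, for all `s` and `β`
simultaneously; large `|β|` are handled by a minorant of `g` that changes sign only once, and for
which these sums, suitably normalized, are monotone in `β`. For fixed `s` this says that a Laurent
polynomial is positive on `(0, ∞)`. By Pólya's theorem its product with `(1 + z) ^ N` has
nonnegative coefficients for large `N`, which says that the normalized `N`-th tensor power of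
`(1, exp ε)` is a catalyst.
-/

open Filter MeasureTheory Topology

section Polya

open Polynomial

theorem coeff_mul_nonneg_of_coeff_nonneg {R : Type*} [Semiring R] [PartialOrder R] [IsOrderedRing R]
    {p q : R[X]} (hp : ∀ m, 0 ≤ p.coeff m) (hq : ∀ m, 0 ≤ q.coeff m) (m : ℕ) :
    0 ≤ (p * q).coeff m := by
  rw [coeff_mul]
  exact Finset.sum_nonneg fun i _ ↦ mul_nonneg (hp i.1) (hq i.2)

theorem coeff_one_add_X_pow_nonneg (N m : ℕ) : 0 ≤ ((1 + X : ℝ[X]) ^ N).coeff m := by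
  rw [coeff_one_add_X_pow]
  positivity

theorem cast_choose_mul_succ_eq (n k : ℕ) :
    (n.choose k : ℝ) * (n + 1) = (n + 1).choose k * (n + 1 - k) := by
  obtain hk | hk := le_or_gt k (n + 1)
  · have h := Nat.choose_mul_succ_eq n k
    rw [← Nat.cast_inj (R := ℝ)] at h
    push_cast [Nat.cast_sub hk] at h
    exact h
  · simp [Nat.choose_eq_zero_of_lt hk, Nat.choose_eq_zero_of_lt (show n < k by lia)]

theorem cast_succ_mul_choose_eq (n k : ℕ) :
    (n.choose k : ℝ) * (n + 1) = (n + 1).choose (k + 1) * (k + 1) := by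
  have h := Nat.add_one_mul_choose_eq n k
  rw [← Nat.cast_inj (R := ℝ)] at h
  push_cast at h
  linarith

theorem coeff_quadratic_mul_one_add_X_pow (a b c : ℝ) (N m : ℕ) :
    (N + 1) * (N + 2) * ((C a * X ^ 2 + C b * X + C c) * (1 + X) ^ N).coeff m =
      (N + 2).choose m * (a * (m * (m - 1)) + b * (m * (N + 2 - m)) +
        c * ((N + 2 - m) * (N + 2 - m - 1))) := by
  have hcoeff : ((C a * X ^ 2 + C b * X + C c) * (1 + X) ^ N).coeff m =
      a * (((1 + X) ^ N * X ^ 2 : ℝ[X]).coeff m) + b * (((1 + X) ^ N * X : ℝ[X]).coeff m) +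
        c * ((1 + X) ^ N : ℝ[X]).coeff m := by
    simp only [← coeff_C_mul, ← coeff_add]
    ring_nf
  rw [hcoeff]
  match m with
  | 0 =>
    simp only [coeff_zero_eq_eval_zero, eval_mul, eval_pow, eval_add, eval_one, eval_X,
      Nat.choose_zero_right, Nat.cast_zero, Nat.cast_one, ne_eq, OfNat.ofNat_ne_zero,
      not_false_eq_true, zero_pow, add_zero, one_pow, mul_zero]
    ring
  | 1 =>
    simp only [coeff_mul_X_pow', Nat.not_ofNat_le_one, ↓reduceIte, coeff_mul_X,
      coeff_one_add_X_pow, Nat.choose_zero_right, Nat.choose_one_right, Nat.cast_add, Nat.cast_one,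
      Nat.cast_ofNat]
    ring
  | m + 2 =>
    have h₀₁ := cast_succ_mul_choose_eq N m
    have h₁₁ := cast_choose_mul_succ_eq N (m + 1)
    have h₁₂ := cast_succ_mul_choose_eq (N + 1) (m + 1)
    have h₂₁ := cast_choose_mul_succ_eq N (m + 2)
    have h₂₂ := cast_choose_mul_succ_eq (N + 1) (m + 2)
    simp only [coeff_mul_X_pow, coeff_mul_X, coeff_one_add_X_pow]
    push_cast at *
    linear_combination a * ((N + 2) * h₀₁ + (m + 1) * h₁₂) + b * ((N + 2) * h₁₁ + (N - m) * h₁₂) +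
      c * ((N + 2) * h₂₁ + (N - m - 1) * h₂₂)

theorem quadratic_form_sub_linear_nonneg {a b c : ℝ} (ha : 0 < a) (hc : 0 < c)
    (hdisc : b ^ 2 < 4 * a * c) {k l : ℝ} (hk : 0 ≤ k) (hl : 0 ≤ l)
    (hkl : 4 * (a + c) * (a + c - b) / (4 * a * c - b ^ 2) ≤ k + l) :
    0 ≤ a * (k * (k - 1)) + b * (k * l) + c * (l * (l - 1)) := by
  have hs : 0 < a + c - b := by nlinarith [sq_nonneg (a - c), sq_nonneg (a + c + b)]
  rw [div_le_iff₀ (by linarith)] at hkl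
  have hsq : (a + c) * (k + l) ≤ a * k ^ 2 + b * (k * l) + c * l ^ 2 := by
    refine le_of_mul_le_mul_left ?_ (by positivity : 0 < 4 * (a + c - b))
    calc 4 * (a + c - b) * ((a + c) * (k + l))
        = 4 * (a + c) * (a + c - b) * (k + l) := by ring
      _ ≤ (k + l) * (4 * a * c - b ^ 2) * (k + l) := by gcongr
      _ ≤ (k + l) * (4 * a * c - b ^ 2) * (k + l) + ((2 * c - b) * l - (2 * a - b) * k) ^ 2 :=
        le_add_of_nonneg_right (sq_nonneg _)
      _ = 4 * (a + c - b) * (a * k ^ 2 + b * (k * l) + c * l ^ 2) := by ring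
  linarith [mul_nonneg ha.le hl, mul_nonneg hc.le hk]

theorem exists_coeff_quadratic_mul_one_add_X_pow_nonneg {a b c : ℝ} (ha : 0 < a) (hc : 0 < c)
    (hdisc : b ^ 2 < 4 * a * c) :
    ∃ N : ℕ, ∀ m, 0 ≤ ((C a * X ^ 2 + C b * X + C c) * (1 + X) ^ N).coeff m := by
  obtain ⟨N, hN⟩ := exists_nat_ge (4 * (a + c) * (a + c - b) / (4 * a * c - b ^ 2))
  refine ⟨N, fun m ↦ ?_⟩
  obtain hm | hm := le_or_gt m (N + 2)
  · have hm' : (m : ℝ) ≤ N + 2 := mod_cast hm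
    have hform := quadratic_form_sub_linear_nonneg ha hc hdisc (k := m) (l := N + 2 - m)
      (by positivity) (by linarith) (by linarith)
    refine (mul_nonneg_iff_of_pos_left (by positivity : 0 < ((N : ℝ) + 1) * (N + 2))).1 ?_
    rw [coeff_quadratic_mul_one_add_X_pow]
    positivity
  · refine (coeff_eq_zero_of_natDegree_lt (lt_of_le_of_lt ?_ hm)).ge
    compute_degree
    lia

theorem exists_sum_mul_coeff_quadratic_mul_one_add_X_pow_nonneg {a b c : ℝ}
    (hdisc : discrim a b c < 0) :
    ∃ N : ℕ, ∀ m, 0 ≤ (a + b + c) * ((C a * X ^ 2 + C b * X + C c) * (1 + X) ^ N).coeff m := by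
  unfold discrim at hdisc
  have ha : 0 < (a + b + c) * a := by nlinarith [sq_nonneg (2 * a + b)]
  have hc : 0 < (a + b + c) * c := by nlinarith [sq_nonneg (2 * c + b)]
  have hs : 0 < (a + b + c) ^ 2 := sq_pos_of_ne_zero (left_ne_zero_of_mul ha.ne')
  obtain ⟨N, hN⟩ := exists_coeff_quadratic_mul_one_add_X_pow_nonneg ha hc
    (b := (a + b + c) * b) (by nlinarith)
  refine ⟨N, fun m ↦ ?_⟩
  calc 0 ≤ _ := hN m
    _ = _ := by rw [← coeff_C_mul]; simp only [C_mul]; ring_nf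

theorem exists_eval_one_mul_coeff_nonneg_of_irreducible {p : ℝ[X]} (hp : Irreducible p)
    (hroot : ∀ z, 0 < z → p.eval z ≠ 0) :
    ∃ N : ℕ, ∀ m, 0 ≤ p.eval 1 * (p * (1 + X) ^ N).coeff m := by
  obtain hdeg | hdeg := (natDegree_le_of_degree_le hp.degree_le_two).lt_or_eq
  · obtain ⟨a, b, rfl⟩ := exists_eq_X_add_C_of_natDegree_le_one (Nat.le_of_lt_succ hdeg)
    have hab : 0 ≤ a * b := by
      by_contra! hab
      have ha : a ≠ 0 := by rintro rfl; simp at hab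
      have hz : 0 < -b / a := by
        rw [← mul_div_mul_left _ _ ha]
        exact div_pos (by linarith) (mul_self_pos.2 ha)
      exact hroot _ hz (by simp [field])
    refine ⟨0, fun m ↦ ?_⟩
    match m with
    | 0 =>
      have : 0 ≤ (a + b) * b := by nlinarith [mul_self_nonneg b]
      simpa using this
    | 1 =>
      have : 0 ≤ (a + b) * a := by nlinarith [mul_self_nonneg a]
      simpa [coeff_C_succ] using this
    | m + 2 => simp [coeff_C_succ]
  · obtain ⟨a, b, c, ha, rfl⟩ :
        ∃ a b c, a ≠ 0 ∧ p = C a * X ^ 2 + C b * X + C c := by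
      refine ⟨p.coeff 2, p.coeff 1, p.coeff 0, ?_, ?_⟩
      · rw [← hdeg]
        exact leadingCoeff_ne_zero.2 hp.ne_zero
      · conv_lhs => rw [p.as_sum_range_C_mul_X_pow, hdeg]
        simp only [Finset.sum_range_succ, Finset.sum_range_zero, pow_zero, pow_one]
        ring
    have hdisc : discrim a b c < 0 := by
      by_contra! hdisc
      obtain ⟨z, hz⟩ := exists_quadratic_eq_zero ha ⟨_, (Real.mul_self_sqrt hdisc).symm⟩
      refine hp.not_isRoot_of_natDegree_ne_one (x := z) (by lia) ?_
      simpa [IsRoot, sq] using hz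
    simpa using exists_sum_mul_coeff_quadratic_mul_one_add_X_pow_nonneg hdisc

theorem exists_eval_one_mul_coeff_nonneg {p : ℝ[X]} (hroot : ∀ z, 0 < z → p.eval z ≠ 0) :
    ∃ N : ℕ, ∀ m, 0 ≤ p.eval 1 * (p * (1 + X) ^ N).coeff m := by
  induction p using WfDvdMonoid.induction_on_irreducible with
  | zero => simp
  | unit u hu =>
    obtain ⟨a, -, rfl⟩ := isUnit_iff.1 hu
    refine ⟨0, fun m ↦ ?_⟩
    match m with
    | 0 => simpa using mul_self_nonneg a
    | m + 1 => simp [coeff_C_succ]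
  | mul p i _ hi ih =>
    simp only [eval_mul, mul_ne_zero_iff] at hroot
    obtain ⟨N₁, hN₁⟩ := exists_eval_one_mul_coeff_nonneg_of_irreducible hi fun z hz ↦ (hroot z hz).1
    obtain ⟨N₂, hN₂⟩ := ih fun z hz ↦ (hroot z hz).2
    refine ⟨N₁ + N₂, fun m ↦ ?_⟩
    simp only [← coeff_C_mul] at hN₁ hN₂ ⊢
    calc 0 ≤ _ := coeff_mul_nonneg_of_coeff_nonneg hN₁ hN₂ m
      _ = _ := by rw [eval_mul, C_mul]; ring_nf

/-- **Pólya's theorem** in one variable. -/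
theorem eventually_coeff_mul_one_add_X_pow_nonneg {p : ℝ[X]} (hp : ∀ z, 0 < z → 0 < p.eval z) :
    ∀ᶠ N in atTop, ∀ m, 0 ≤ (p * (1 + X) ^ N).coeff m := by
  obtain ⟨N₀, hN₀⟩ := exists_eval_one_mul_coeff_nonneg fun z hz ↦ (hp z hz).ne'
  have hN₀' (m : ℕ) : 0 ≤ (p * (1 + X) ^ N₀).coeff m :=
    (mul_nonneg_iff_of_pos_left (hp 1 one_pos)).1 (hN₀ m)
  filter_upwards [eventually_ge_atTop N₀] with N hN m
  obtain ⟨k, rfl⟩ := Nat.exists_eq_add_of_le hN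
  rw [pow_add, ← mul_assoc]
  exact coeff_mul_nonneg_of_coeff_nonneg hN₀' (coeff_one_add_X_pow_nonneg k) m

theorem coeff_mul_one_add_X_pow_eq_sum {R : Type*} [CommSemiring R] (p : R[X]) (N m : ℕ) :
    (p * (1 + X) ^ N).coeff m =
      ∑ l ∈ Finset.range (N + 1), N.choose l * if l ≤ m then p.coeff (m - l) else 0 := by
  simp only [add_comm 1 X, add_pow, one_pow, mul_one, Finset.mul_sum, finsetSum_coeff, ← mul_assoc,
    coeff_mul_natCast, coeff_mul_X_pow']
  exact Finset.sum_congr rfl fun l _ ↦ mul_comm _ _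

theorem exists_polynomial_coeff_eq_of_finite_support {K : Type*} [Field K] [TopologicalSpace K]
    [T2Space K] {a : ℤ → K} (ha : a.support.Finite) :
    ∃ (r : ℤ) (p : K[X]), (∀ k : ℕ, p.coeff k = a (r + k)) ∧ (∀ k < r, a k = 0) ∧
      ∀ z ≠ 0, ∑' k : ℤ, a k * z ^ k = z ^ r * p.eval z := by
  obtain ⟨r, hr⟩ := ha.bddBelow
  obtain ⟨R, hR⟩ := ha.bddAbove
  have hlow (k : ℤ) (hk : k < r) : a k = 0 := by
    by_contra h
    exact (hr h).not_gt hk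
  have hhigh (k : ℕ) (hk : k ∉ Finset.range ((R - r).toNat + 1)) : a (r + k) = 0 := by
    by_contra h
    have := hR h
    simp only [Finset.mem_range] at hk
    lia
  refine ⟨r, ∑ k ∈ Finset.range ((R - r).toNat + 1), monomial k (a (r + k)), fun k ↦ ?_, hlow,
    fun z hz ↦ ?_⟩
  · simp only [finsetSum_coeff, coeff_monomial, Finset.sum_ite_eq']
    split_ifs with hk
    · rfl
    · exact (hhigh k hk).symm
  · rw [← (Equiv.addLeft r).tsum_eq, ← Nat.cast_injective.tsum_eq,
      tsum_eq_sum (s := Finset.range ((R - r).toNat + 1))]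
    · simp [eval_finsetSum, Finset.mul_sum, zpow_add₀ hz, mul_left_comm]
    · intro k hk
      simp [hhigh k hk]
    · intro k hk
      refine ⟨k.toNat, Int.toNat_of_nonneg ?_⟩
      by_contra! hneg
      simp [hlow (r + k) (by lia)] at hk

theorem eventually_sum_choose_mul_nonneg {a : ℤ → ℝ} (ha : a.support.Finite)
    (hpos : ∀ z : ℝ, 0 < z → 0 < ∑' k : ℤ, a k * z ^ k) :
    ∀ᶠ N : ℕ in atTop, ∀ m : ℤ, 0 ≤ ∑ l ∈ Finset.range (N + 1), N.choose l * a (m - l) := by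
  obtain ⟨r, p, hcoeff, hlow, heval⟩ := exists_polynomial_coeff_eq_of_finite_support ha
  have hp (z : ℝ) (hz : 0 < z) : 0 < p.eval z :=
    (mul_pos_iff_of_pos_left (zpow_pos hz r)).1 (heval z hz.ne' ▸ hpos z hz)
  filter_upwards [eventually_coeff_mul_one_add_X_pow_nonneg hp] with N hN m
  obtain hm | hm := lt_or_ge m r
  · exact (Finset.sum_eq_zero fun l _ ↦ by rw [hlow (m - l) (by lia), mul_zero]).ge
  · obtain ⟨k, rfl⟩ := Int.le.dest hm
    convert hN k using 1
    rw [coeff_mul_one_add_X_pow_eq_sum]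
    refine Finset.sum_congr rfl fun l _ ↦ ?_
    split_ifs with hl
    · rw [hcoeff, Nat.cast_sub hl, add_sub_assoc]
    · rw [hlow _ (by lia)]

end Polya

section Majorization

open Finset

/-- The hinge function `v ↦ (v - t)⁺`. Its sums over the entries of two vectors characterise
majorization. -/
def hinge (t v : ℝ) : ℝ := max (v - t) 0

theorem hinge_nonneg (t v : ℝ) : 0 ≤ hinge t v := le_max_right _ _

theorem hinge_of_le {t v : ℝ} (h : t ≤ v) : hinge t v = v - t := max_eq_left (sub_nonneg.2 h)

theorem hinge_of_ge {t v : ℝ} (h : v ≤ t) : hinge t v = 0 := max_eq_right (sub_nonpos.2 h)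

theorem sum_hinge_eq {ι : Type*} [Fintype ι] {x : ι → ℝ} {s : Finset ι} {t : ℝ}
    (hs : ∀ i ∈ s, t ≤ x i) (hs' : ∀ i ∉ s, x i ≤ t) :
    ∑ i, hinge t (x i) = ∑ i ∈ s, x i - #s * t := by
  rw [← sum_subset (subset_univ s) fun i _ hi ↦ hinge_of_ge (hs' i hi),
    sum_congr rfl fun i hi ↦ hinge_of_le (hs i hi), sum_sub_distrib, sum_const, nsmul_eq_mul]

theorem sum_sub_le_sum_hinge {ι : Type*} [Fintype ι] (x : ι → ℝ) (s : Finset ι) (t : ℝ) :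
    ∑ i ∈ s, x i - #s * t ≤ ∑ i, hinge t (x i) := by
  calc ∑ i ∈ s, x i - #s * t = ∑ i ∈ s, (x i - t) := by simp
    _ ≤ ∑ i ∈ s, hinge t (x i) := sum_le_sum fun i _ ↦ le_max_left _ _
    _ ≤ ∑ i, hinge t (x i) :=
      sum_le_sum_of_subset_of_nonneg (subset_univ s) fun i _ _ ↦ hinge_nonneg _ _

theorem exists_card_eq_forall_notMem_le {κ : Type*} [Fintype κ] (y : κ → ℝ) {k : ℕ}
    (hk : k ≤ Fintype.card κ) :
    ∃ s : Finset κ, #s = k ∧ ∀ i ∈ s, ∀ j ∉ s, y j ≤ y i := by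
  classical
  induction k with
  | zero => exact ⟨∅, by simp⟩
  | succ k ih =>
    obtain ⟨s, hs, hle⟩ := ih (by lia)
    have hne : sᶜ.Nonempty := by
      rw [← card_pos, card_compl]
      lia
    obtain ⟨a, ha, hmax⟩ := exists_max_image sᶜ y hne
    rw [mem_compl] at ha
    refine ⟨insert a s, by rw [card_insert_of_notMem ha, hs], fun i hi j hj ↦ ?_⟩
    rw [mem_insert, not_or] at hj
    obtain rfl | hi := mem_insert.1 hi
    · exact hmax j (mem_compl.2 hj.2)
    · exact hle i hi j hj.2

variable {ι κ : Type*} [Fintype ι] [DecidableEq ι] [Fintype κ] [DecidableEq κ]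

theorem sum_le_topSum (x : ι → ℝ) {s : Finset ι} {k : ℕ} (hs : #s ≤ k) :
    ∑ i ∈ s, x i ≤ topSum x k :=
  le_sup' (fun s ↦ ∑ i ∈ s, x i) (by simpa using hs)

theorem topSum_le_iff (x : ι → ℝ) {k : ℕ} {a : ℝ} :
    topSum x k ≤ a ↔ ∀ s : Finset ι, #s ≤ k → ∑ i ∈ s, x i ≤ a := by
  simp [topSum, sup'_le_iff]

theorem PMaj.sum_hinge_le {x : ι → ℝ} {y : κ → ℝ} (h : PMaj x y) {t : ℝ} (ht : 0 ≤ t) :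
    ∑ i, hinge t (x i) ≤ ∑ j, hinge t (y j) := by
  set s := univ.filter fun i ↦ t < x i with hs
  have hy : topSum y #s ≤ ∑ j, hinge t (y j) + #s * t := by
    refine (topSum_le_iff y).2 fun s' hs' ↦ ?_
    have : (#s' : ℝ) * t ≤ #s * t := by gcongr
    linarith [sum_sub_le_sum_hinge y s' t]
  calc ∑ i, hinge t (x i) = ∑ i ∈ s, x i - #s * t :=
        sum_hinge_eq (by simp +contextual [hs, le_of_lt]) (by simp [hs])
    _ ≤ topSum y #s - #s * t := by gcongr; exact (sum_le_topSum x le_rfl).trans (h.1 _)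
    _ ≤ ∑ j, hinge t (y j) := by linarith

theorem pMaj_of_sum_hinge_le {x : ι → ℝ} {y : κ → ℝ} (hx : ∀ i, 0 ≤ x i) (hy : ∀ j, 0 ≤ y j)
    (hsum : ∑ i, x i = ∑ j, y j)
    (h : ∀ j, ∑ i, hinge (y j) (x i) ≤ ∑ i, hinge (y j) (y i)) : PMaj x y := by
  refine ⟨fun k ↦ (topSum_le_iff x).2 fun s hs ↦ ?_, hsum⟩
  obtain rfl | hk₀ := k.eq_zero_or_pos
  · rw [card_eq_zero.1 (Nat.le_zero.1 hs)]
    simpa using sum_le_topSum y (s := ∅) (k := 0) (by simp)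
  obtain hk | hk := le_or_gt k (Fintype.card κ)
  · obtain ⟨T, rfl, hT⟩ := exists_card_eq_forall_notMem_le y hk
    obtain ⟨j, hj, hmin⟩ := exists_min_image T y (card_pos.1 hk₀)
    calc ∑ i ∈ s, x i = ∑ i ∈ s, x i - #s * y j + #s * y j := by ring
      _ ≤ ∑ i, hinge (y j) (x i) + #s * y j := by gcongr; exact sum_sub_le_sum_hinge x s _
      _ ≤ ∑ i, hinge (y j) (y i) + #T * y j := by gcongr; exacts [h j, hy j]
      _ = ∑ i ∈ T, y i := by rw [sum_hinge_eq hmin (hT j hj)]; ring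
      _ ≤ topSum y #T := sum_le_topSum y le_rfl
  · calc ∑ i ∈ s, x i ≤ ∑ i, x i :=
          sum_le_sum_of_subset_of_nonneg (subset_univ s) fun i _ _ ↦ hx i
      _ = ∑ j, y j := hsum
      _ ≤ topSum y k := sum_le_topSum y hk.le

end Majorization

section LatticeSums

theorem abs_tsum_int_sub_integral_le {F D : ℝ → ℝ} (hF : Integrable F) (hD : Integrable D)
    (h : ∀ (k : ℤ), ∀ t ∈ Set.Ioc (k : ℝ) (k + 1), |F k - F t| ≤ D t) :
    |∑' k : ℤ, F k - ∫ t, F t| ≤ ∫ t, D t := by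
  have hcell {E : ℝ → ℝ} (hE : Integrable E) :
      HasSum (fun k : ℤ ↦ ∫ t in (k : ℝ)..(k + 1), E t) (∫ t, E t) := by
    simpa using hE.hasSum_intervalIntegral 0
  have hbound (k : ℤ) : ‖F k - ∫ t in (k : ℝ)..(k + 1), F t‖ ≤ ∫ t in (k : ℝ)..(k + 1), D t := by
    have hconst : F k - ∫ t in (k : ℝ)..(k + 1), F t = ∫ t in (k : ℝ)..(k + 1), (F k - F t) := by
      rw [intervalIntegral.integral_sub (by simp) hF.intervalIntegrable]
      simp
    rw [hconst]
    exact intervalIntegral.norm_integral_le_of_norm_le (by linarith)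
      (ae_of_all _ fun t ht ↦ h k t ht) hD.intervalIntegrable
  have hsummable := Summable.of_norm_bounded (hcell hD).summable hbound
  have hFsum : Summable fun k : ℤ ↦ F k := by
    simpa using hsummable.add (hcell hF).summable
  rw [← (hcell hF).tsum_eq, ← hFsum.tsum_sub (hcell hF).summable, ← Real.norm_eq_abs]
  exact tsum_of_norm_bounded (hcell hD) hbound

/-- The sum of `f` over the lattice `s + εℤ`; equal to `0` when the series diverges. -/
noncomputable def latticeSum (f : ℝ → ℝ) (ε s : ℝ) : ℝ := ∑' k : ℤ, f (s + k * ε)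

theorem latticeSum_const_mul (a : ℝ) (f : ℝ → ℝ) (ε s : ℝ) :
    latticeSum (fun u ↦ a * f u) ε s = a * latticeSum f ε s := tsum_mul_left

theorem latticeSum_comp_neg (f : ℝ → ℝ) (ε s : ℝ) :
    latticeSum (fun u ↦ f (-u)) ε s = latticeSum f ε (-s) := by
  unfold latticeSum
  rw [← (Equiv.neg ℤ).tsum_eq]
  refine tsum_congr fun k ↦ congrArg f ?_
  simp only [Equiv.neg_apply, Int.cast_neg]
  ring

theorem finite_support_comp_lattice {f : ℝ → ℝ} (hf : HasCompactSupport f) {ε : ℝ} (hε : ε ≠ 0)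
    (s : ℝ) : (fun k : ℤ ↦ f (s + k * ε)).support.Finite := by
  have hlattice : Tendsto (fun k : ℤ ↦ s + k * ε) cofinite (cocompact ℝ) :=
    ((Homeomorph.mulRight₀ ε hε).trans
      (Homeomorph.addLeft s)).isClosedEmbedding.tendsto_cocompact.comp Int.tendsto_coe_cofinite
  rw [hasCompactSupport_iff_eventuallyEq, coclosedCompact_eq_cocompact] at hf
  exact hlattice.eventually hf

theorem latticeSum_le_latticeSum {f g : ℝ → ℝ} (hf : HasCompactSupport f)
    (hg : HasCompactSupport g) (hfg : ∀ u, f u ≤ g u) {ε : ℝ} (hε : ε ≠ 0) (s : ℝ) :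
    latticeSum f ε s ≤ latticeSum g ε s :=
  (summable_of_hasFiniteSupport (finite_support_comp_lattice hf hε s)).tsum_le_tsum
    (fun _ ↦ hfg _) (summable_of_hasFiniteSupport (finite_support_comp_lattice hg hε s))

theorem abs_mul_latticeSum_sub_integral_le {f D : ℝ → ℝ} (hf : Integrable f) (hD : Integrable D)
    {ε : ℝ} (hε : 0 < ε) (h : ∀ u v, |u - v| ≤ ε → |f u - f v| ≤ D v) (s : ℝ) :
    |ε * latticeSum f ε s - ∫ u, f u| ≤ ∫ u, D u := by
  have hsubst (E : ℝ → ℝ) : ∫ t, ε * E (s + t * ε) = ∫ u, E u := by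
    rw [integral_const_mul, Measure.integral_comp_mul_right (fun t ↦ E (s + t)),
      integral_add_left_eq_self, abs_of_pos (inv_pos.2 hε), smul_eq_mul,
      mul_inv_cancel_left₀ hε.ne']
  have hint {E : ℝ → ℝ} (hE : Integrable E) : Integrable fun t ↦ ε * E (s + t * ε) :=
    ((hE.comp_add_left s).comp_mul_right' hε.ne').const_mul ε
  rw [← hsubst f, ← hsubst D, latticeSum, ← tsum_mul_left]
  refine abs_tsum_int_sub_integral_le (hint hf) (hint hD) fun k t ht ↦ ?_
  rw [← mul_sub, abs_mul, abs_of_pos hε]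
  refine mul_le_mul_of_nonneg_left (h _ _ ?_) hε.le
  rw [add_sub_add_left_eq_sub, ← sub_mul, abs_mul, abs_of_pos hε]
  refine mul_le_of_le_one_left hε.le (abs_le.2 ⟨?_, ?_⟩) <;> linarith [ht.1, ht.2]

variable {X : Type*} [PseudoMetricSpace X] {P : Set X} {G : X → ℝ → ℝ} {K : Set ℝ}

theorem eventually_abs_mul_latticeSum_sub_integral_le (hP : IsCompact P)
    (hG : Continuous fun z : X × ℝ ↦ G z.1 z.2) (hK : IsCompact K) (hGK : ∀ p, ∀ u ∉ K, G p u = 0)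
    {η : ℝ} (hη : 0 < η) :
    ∀ᶠ ε in 𝓝[>] 0, ∀ p ∈ P, ∀ s, |ε * latticeSum (G p) ε s - ∫ u, G p u| ≤ η := by
  set K₁ := Metric.cthickening 1 K
  set W := volume.real K₁
  have hη' : 0 < η / (W + 1) := by positivity
  obtain ⟨δ, hδ, hδG⟩ := Metric.uniformContinuousOn_iff.1
    ((hP.prod (hK.cthickening (r := 2))).uniformContinuousOn_of_continuous hG.continuousOn) _ hη'
  filter_upwards [Ioo_mem_nhdsGT (lt_min hδ one_pos)] with ε hε p hp s
  have hεδ : ε < δ := hε.2.trans_le (min_le_left _ _)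
  have hε₁ : ε ≤ 1 := hε.2.le.trans (min_le_right _ _)
  have hGp : Integrable (G p) :=
    Continuous.integrable_of_hasCompactSupport (by fun_prop) (.intro hK (hGK p))
  set D := K₁.indicator fun _ ↦ η / (W + 1)
  have hD : Integrable D :=
    (integrable_indicator_iff Metric.isClosed_cthickening.measurableSet).2
      (integrableOn_const hK.cthickening.measure_ne_top)
  refine (abs_mul_latticeSum_sub_integral_le hGp hD hε.1 (fun u v huv ↦ ?_) s).trans ?_
  · have huv₁ : dist u v ≤ 1 := huv.trans hε₁
    by_cases hv : v ∈ K₁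
    · have hu₂ : u ∈ Metric.cthickening 2 K := by
        rw [← one_add_one_eq_two]
        exact Metric.cthickening_cthickening_subset zero_le_one zero_le_one K
          (Metric.mem_cthickening_of_dist_le u v 1 K₁ hv huv₁)
      have hdist : dist (p, u) (p, v) < δ := by
        rw [dist_prod_same_left]
        exact lt_of_le_of_lt huv hεδ
      simpa only [D, Set.indicator_of_mem hv, Real.dist_eq] using
        (hδG (p, u) ⟨hp, hu₂⟩ (p, v) ⟨hp, Metric.cthickening_mono one_le_two K hv⟩ hdist).le
    · have hu : u ∉ K := fun hu ↦
        hv (Metric.mem_cthickening_of_dist_le v u 1 K hu (dist_comm u v ▸ huv₁))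
      have hv' : v ∉ K := fun hv' ↦ hv (Metric.self_subset_cthickening K hv')
      simp [D, hv, hGK p u hu, hGK p v hv']
  · rw [integral_indicator Metric.isClosed_cthickening.measurableSet, setIntegral_const,
      smul_eq_mul, mul_div_left_comm]
    exact mul_le_of_le_one_right hη.le (div_le_one_of_le₀ (by linarith) (by positivity))

theorem eventually_latticeSum_pos (hP : IsCompact P)
    (hG : Continuous fun z : X × ℝ ↦ G z.1 z.2) (hK : IsCompact K) (hGK : ∀ p, ∀ u ∉ K, G p u = 0)
    (hpos : ∀ p ∈ P, 0 < ∫ u, G p u) :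
    ∀ᶠ ε in 𝓝[>] 0, ∀ p ∈ P, ∀ s, 0 < latticeSum (G p) ε s := by
  have hcont : ContinuousOn (fun p ↦ ∫ u, G p u) P :=
    continuousOn_integral_of_compact_support hK hG.continuousOn fun p u _ hu ↦ hGK p u hu
  obtain ⟨η, hη, hηP⟩ : ∃ η, 0 < η ∧ ∀ p ∈ P, η < ∫ u, G p u := by
    obtain rfl | hne := P.eq_empty_or_nonempty
    · exact ⟨1, one_pos, by simp⟩
    · obtain ⟨p₀, hp₀, hmin⟩ := hP.exists_isMinOn hne hcont
      exact ⟨_, half_pos (hpos p₀ hp₀), fun p hp ↦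
        (half_lt_self (hpos p₀ hp₀)).trans_le (hmin hp)⟩
  filter_upwards [eventually_abs_mul_latticeSum_sub_integral_le hP hG hK hGK hη,
    self_mem_nhdsWithin] with ε h hε p hp s
  refine (mul_pos_iff_of_pos_left (Set.mem_Ioi.1 hε)).1 ?_
  linarith [(abs_le.1 (h p hp s)).1, hηP p hp]

end LatticeSums

section Laplace

/-- The bilateral Laplace transform, with the sign of the exponent chosen so that large `β` probes
the right tail of `g`. -/
noncomputable def bilateralLaplace (g : ℝ → ℝ) (β : ℝ) : ℝ := ∫ u, g u * Real.exp (β * u)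

theorem bilateralLaplace_comp_neg (g : ℝ → ℝ) (β : ℝ) :
    bilateralLaplace (fun u ↦ g (-u)) β = bilateralLaplace g (-β) := by
  unfold bilateralLaplace
  rw [← integral_neg_eq_self]
  simp

theorem bilateralLaplace_neg (g : ℝ → ℝ) (β : ℝ) :
    bilateralLaplace (-g) β = -bilateralLaplace g β := by
  simp [bilateralLaplace, integral_neg]

variable {g : ℝ → ℝ}

theorem integrable_mul_exp (hg : Continuous g) (hgs : HasCompactSupport g) (β b : ℝ) :
    Integrable fun u ↦ g u * Real.exp (β * (u - b)) :=
  Continuous.integrable_of_hasCompactSupport (by fun_prop) hgs.mul_right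

theorem integral_mul_exp_sub (g : ℝ → ℝ) (β b : ℝ) :
    ∫ u, g u * Real.exp (β * (u - b)) = Real.exp (-(β * b)) * bilateralLaplace g β := by
  rw [bilateralLaplace, ← integral_const_mul]
  refine integral_congr_ae (ae_of_all _ fun u ↦ ?_)
  beta_reduce
  rw [mul_left_comm, ← Real.exp_add]
  ring_nf

/-- `g` is nonnegative, and not identically zero, on some half-line `[b, ∞)`. -/
def HasPosRightTail (g : ℝ → ℝ) : Prop :=
  ∃ b, (∀ u, b ≤ u → 0 ≤ g u) ∧ ∃ u, b < u ∧ 0 < g u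

/-- The minorant `min (g u) (u - b)⁺` of `g`. If `g ≥ 0` on `[b, ∞)` then it has the sign of
`u - b`, so that multiplying it by `exp (γ * (u - b))` gives an increasing function of `γ`. -/
noncomputable def tailMinorant (g : ℝ → ℝ) (b u : ℝ) : ℝ := min (g u) (max (u - b) 0)

theorem continuous_tailMinorant (hg : Continuous g) (b : ℝ) : Continuous (tailMinorant g b) := by
  unfold tailMinorant
  fun_prop

theorem hasCompactSupport_tailMinorant (hgs : HasCompactSupport g) (b : ℝ) :
    HasCompactSupport (tailMinorant g b) :=
  hgs.mono fun u hu h ↦ hu (by simp [tailMinorant, h])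

theorem tailMinorant_le (g : ℝ → ℝ) (b u : ℝ) : tailMinorant g b u ≤ g u := min_le_left _ _

theorem tailMinorant_nonneg {b u : ℝ} (hgu : 0 ≤ g u) : 0 ≤ tailMinorant g b u :=
  le_min hgu (le_max_right _ _)

theorem tailMinorant_nonpos (g : ℝ → ℝ) {b u : ℝ} (hu : u ≤ b) : tailMinorant g b u ≤ 0 :=
  (min_le_right _ _).trans (max_eq_right (sub_nonpos.2 hu)).le

theorem monotone_tailMinorant_mul_exp {b : ℝ} (hb : ∀ u, b ≤ u → 0 ≤ g u) (u : ℝ) :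
    Monotone fun γ ↦ tailMinorant g b u * Real.exp (γ * (u - b)) := by
  intro γ γ' hγ
  obtain hu | hu := le_total b u
  · have := sub_nonneg.2 hu
    exact mul_le_mul_of_nonneg_left (by gcongr) (tailMinorant_nonneg (hb u hu))
  · exact mul_le_mul_of_nonpos_left
      (Real.exp_le_exp.2 (mul_le_mul_of_nonpos_right hγ (sub_nonpos.2 hu)))
      (tailMinorant_nonpos g hu)

theorem exists_integral_tailMinorant_mul_exp_pos (hg : Continuous g) (hgs : HasCompactSupport g)
    {b : ℝ} (hb : ∀ u, b ≤ u → 0 ≤ g u) {u₀ : ℝ} (hu₀ : b < u₀) (hgu₀ : 0 < g u₀) :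
    ∃ γ, 0 < ∫ u, tailMinorant g b u * Real.exp (γ * (u - b)) := by
  set f := tailMinorant g b
  have hf : Continuous f := continuous_tailMinorant hg b
  have hfs : HasCompactSupport f := hasCompactSupport_tailMinorant hgs b
  have hf_nonneg (u : ℝ) (hu : b ≤ u) : 0 ≤ f u := tailMinorant_nonneg (hb u hu)
  have hf_nonpos (u : ℝ) (hu : u ≤ b) : f u ≤ 0 := tailMinorant_nonpos g hu
  set φ : ℝ → ℝ := fun u ↦ max (f u) 0 * (u - b)
  have hφ : Continuous φ := by fun_prop
  have hφs : HasCompactSupport φ := hfs.mono fun u hu h ↦ hu (by simp [φ, h])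
  have hφ_int : 0 < ∫ u, φ u := by
    refine hφ.integral_pos_of_hasCompactSupport_nonneg_nonzero hφs (fun u ↦ ?_) (x := u₀) ?_
    · obtain hu | hu := le_total b u
      · exact mul_nonneg (le_max_right _ _) (sub_nonneg.2 hu)
      · simp [φ, max_eq_right (hf_nonpos u hu)]
    · have hfu₀ : 0 < f u₀ := lt_min hgu₀ (lt_max_of_lt_left (sub_pos.2 hu₀))
      exact (mul_pos (lt_max_of_lt_left hfu₀) (sub_pos.2 hu₀)).ne'
  have hint_f := hf.integrable_of_hasCompactSupport (μ := volume) hfs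
  have hint_φ := hφ.integrable_of_hasCompactSupport (μ := volume) hφs
  obtain ⟨n, hn⟩ := exists_nat_gt (-(∫ u, f u) / ∫ u, φ u)
  refine ⟨n, ?_⟩
  calc 0 < ∫ u, f u + n * φ u := by
        rw [integral_add hint_f (hint_φ.const_mul _), integral_const_mul]
        linarith [(div_lt_iff₀ hφ_int).1 hn]
    _ ≤ ∫ u, f u * Real.exp (n * (u - b)) := by
        refine integral_mono (hint_f.add (hint_φ.const_mul _)) (integrable_mul_exp hf hfs n b)
          fun u ↦ ?_
        obtain hu | hu := le_total b u
        · have := mul_le_mul_of_nonneg_left (Real.add_one_le_exp (n * (u - b))) (hf_nonneg u hu)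
          simp only [φ, max_eq_left (hf_nonneg u hu)]
          linarith
        · simpa [φ, f, max_eq_right (hf_nonpos u hu)] using
            monotone_tailMinorant_mul_exp hb u (Nat.cast_nonneg n)

theorem HasPosRightTail.exists_bilateralLaplace_pos (hg : Continuous g) (hgs : HasCompactSupport g)
    (h : HasPosRightTail g) : ∃ γ, 0 < bilateralLaplace g γ := by
  obtain ⟨b, hb, u₀, hu₀, hgu₀⟩ := h
  obtain ⟨γ, hγ⟩ := exists_integral_tailMinorant_mul_exp_pos hg hgs hb hu₀ hgu₀
  refine ⟨γ, (mul_pos_iff_of_pos_left (Real.exp_pos (-(γ * b)))).1 ?_⟩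
  rw [← integral_mul_exp_sub]
  refine hγ.trans_le (integral_mono ?_ (integrable_mul_exp hg hgs γ b) fun u ↦ ?_)
  · exact integrable_mul_exp (continuous_tailMinorant hg b)
      (hasCompactSupport_tailMinorant hgs b) γ b
  · exact mul_le_mul_of_nonneg_right (tailMinorant_le g b u) (Real.exp_nonneg _)

theorem HasPosRightTail.exists_eventually_latticeSum_pos (hg : Continuous g)
    (hgs : HasCompactSupport g) (h : HasPosRightTail g) :
    ∃ γ₀, ∀ᶠ ε in 𝓝[>] 0, ∀ γ ≥ γ₀, ∀ s,
      0 < latticeSum (fun u ↦ g u * Real.exp (γ * u)) ε s := by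
  obtain ⟨b, hb, u₀, hu₀, hgu₀⟩ := h
  obtain ⟨γ₀, hγ₀⟩ := exists_integral_tailMinorant_mul_exp_pos hg hgs hb hu₀ hgu₀
  have hf := continuous_tailMinorant hg b
  have hfs := hasCompactSupport_tailMinorant hgs b
  refine ⟨γ₀, ?_⟩
  filter_upwards [self_mem_nhdsWithin, eventually_latticeSum_pos isCompact_singleton
    (G := fun γ u ↦ tailMinorant g b u * Real.exp (γ * (u - b))) (by fun_prop) hfs
    (fun γ u hu ↦ by simp [image_eq_zero_of_notMem_tsupport hu]) (by simpa using hγ₀)]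
    with ε hε hpos γ hγ s
  have hshift : latticeSum (fun u ↦ g u * Real.exp (γ * u)) ε s =
      Real.exp (γ * b) * latticeSum (fun u ↦ g u * Real.exp (γ * (u - b))) ε s := by
    rw [← latticeSum_const_mul]
    congr 1 with u
    rw [mul_left_comm, ← Real.exp_add]
    ring_nf
  rw [hshift]
  refine mul_pos (Real.exp_pos _) ((hpos γ₀ rfl s).trans_le ?_)
  refine latticeSum_le_latticeSum hfs.mul_right hgs.mul_right (fun u ↦ ?_) (ne_of_gt hε) s
  exact (monotone_tailMinorant_mul_exp hb u hγ).trans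
    (mul_le_mul_of_nonneg_right (tailMinorant_le g b u) (Real.exp_nonneg _))

theorem eventually_forall_latticeSum_mul_exp_pos (hg : Continuous g) (hgs : HasCompactSupport g)
    (hright : HasPosRightTail g) (hleft : HasPosRightTail fun u ↦ g (-u))
    (hpos : ∀ β, 0 < bilateralLaplace g β) :
    ∀ᶠ ε in 𝓝[>] 0, ∀ β s, 0 < latticeSum (fun u ↦ g u * Real.exp (β * u)) ε s := by
  obtain ⟨γ₁, h₁⟩ := hright.exists_eventually_latticeSum_pos hg hgs
  obtain ⟨γ₂, h₂⟩ := hleft.exists_eventually_latticeSum_pos (by fun_prop)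
    (hgs.comp_homeomorph (Homeomorph.neg ℝ))
  have hmid := eventually_latticeSum_pos (isCompact_Icc (a := -γ₂) (b := γ₁))
    (G := fun β u ↦ g u * Real.exp (β * u)) (by fun_prop) hgs
    (fun β u hu ↦ by simp [image_eq_zero_of_notMem_tsupport hu]) fun β _ ↦ hpos β
  filter_upwards [h₁, h₂, hmid] with ε h₁ h₂ hmid β s
  obtain hβ₁ | hβ₁ := le_total γ₁ β
  · exact h₁ β hβ₁ s
  obtain hβ₂ | hβ₂ := le_total β (-γ₂)
  · have := latticeSum_comp_neg (fun u ↦ g u * Real.exp (β * u)) ε (-s)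
    rw [neg_neg] at this
    rw [← this]
    simpa using h₂ (-β) (by linarith) (-s)
  · exact hmid β ⟨hβ₂, hβ₁⟩ s

theorem bilateralLaplace_sum_mul_comp_sub (hg : Continuous g) (hgs : HasCompactSupport g)
    {J : Type*} (s : Finset J) (a τ : J → ℝ) (β : ℝ) :
    bilateralLaplace (fun u ↦ ∑ j ∈ s, a j * g (u - τ j)) β =
      (∑ j ∈ s, a j * Real.exp (β * τ j)) * bilateralLaplace g β := by
  have hcont (j : J) : Continuous fun u ↦ g (u - τ j) := by fun_prop
  have hsupp (j : J) : HasCompactSupport fun u ↦ g (u - τ j) :=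
    hgs.comp_homeomorph (Homeomorph.subRight (τ j))
  have hint (j : J) : Integrable fun u ↦ a j * g (u - τ j) * Real.exp (β * u) := by
    simpa using integrable_mul_exp ((hcont j).const_mul (a j)) (hsupp j).mul_left β 0
  have hshift (j : J) : ∫ u, a j * g (u - τ j) * Real.exp (β * u) =
      a j * Real.exp (β * τ j) * bilateralLaplace g β := by
    rw [bilateralLaplace, ← integral_const_mul, ← integral_add_right_eq_self _ (τ j)]
    refine integral_congr_ae (ae_of_all _ fun u ↦ ?_)
    simp only [add_sub_cancel_right, mul_add, Real.exp_add]
    ring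
  rw [bilateralLaplace]
  simp only [Finset.sum_mul]
  rw [integral_finsetSum _ fun j _ ↦ hint j, Finset.sum_congr rfl fun j _ ↦ hshift j]

theorem bilateralLaplace_pos_of_sum_mul_comp_sub_nonneg (hg : Continuous g)
    (hgs : HasCompactSupport g) (hg_ne : ∃ β, bilateralLaplace g β ≠ 0) {J : Type*} {s : Finset J}
    {a τ : J → ℝ} (ha : ∀ j ∈ s, 0 ≤ a j) (ha_pos : 0 < ∑ j ∈ s, a j)
    (hsum : ∀ u, 0 ≤ ∑ j ∈ s, a j * g (u - τ j)) (β : ℝ) : 0 < bilateralLaplace g β := by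
  set G : ℝ → ℝ := fun u ↦ ∑ j ∈ s, a j * g (u - τ j)
  have : Continuous G := by fun_prop
  have hGs : HasCompactSupport G := by
    have := Finset.sum_induction (s := s) (fun j u ↦ a j * g (u - τ j)) HasCompactSupport
      (fun _ _ ↦ .add) .zero
      fun j _ ↦ (hgs.comp_homeomorph (Homeomorph.subRight (τ j))).mul_left
    simpa only [Finset.sum_fn] using this
  have hweight (β : ℝ) : 0 < ∑ j ∈ s, a j * Real.exp (β * τ j) := by
    obtain ⟨j, hj, haj⟩ := (Finset.sum_pos_iff_of_nonneg ha).1 ha_pos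
    exact Finset.sum_pos' (fun j hj ↦ mul_nonneg (ha j hj) (Real.exp_nonneg _))
      ⟨j, hj, mul_pos haj (Real.exp_pos _)⟩
  have hmul (β : ℝ) := bilateralLaplace_sum_mul_comp_sub hg hgs s a τ β
  obtain ⟨u, hu⟩ : ∃ u, G u ≠ 0 := by
    by_contra! hzero
    obtain ⟨β₀, hβ₀⟩ := hg_ne
    have : bilateralLaplace G β₀ = 0 := by simp [bilateralLaplace, hzero]
    exact mul_ne_zero (hweight β₀).ne' hβ₀ ((hmul β₀).symm.trans this)
  refine (mul_pos_iff_of_pos_left (hweight β)).1 ?_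
  rw [← hmul β]
  exact Continuous.integral_pos_of_hasCompactSupport_nonneg_nonzero (x := u) (by fun_prop)
    hGs.mul_right (fun u ↦ mul_nonneg (hsum u) (Real.exp_nonneg _))
    (mul_ne_zero hu (Real.exp_ne_zero _))

end Laplace

section PowKernel

/-- The function on `(0, ∞)` with second derivative `v ^ (α - 2)` whose sum over the entries of a
vector determines `fAlpha α`. -/
noncomputable def powKernel (α v : ℝ) : ℝ :=
  if α = 1 then v * Real.log v else if α = 0 then -Real.log v else v ^ α / (α * (α - 1))

/-- The derivative of `powKernel α` on `(0, ∞)`. -/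
noncomputable def powKernelDeriv (α v : ℝ) : ℝ :=
  if α = 1 then Real.log v + 1 else v ^ (α - 1) / (α - 1)

theorem hasDerivAt_powKernel (α : ℝ) {v : ℝ} (hv : 0 < v) :
    HasDerivAt (powKernel α) (powKernelDeriv α v) v := by
  unfold powKernel powKernelDeriv
  obtain rfl | h1 := eq_or_ne α 1
  · simpa using Real.hasDerivAt_mul_log hv.ne'
  obtain rfl | h0 := eq_or_ne α 0
  · simpa [Real.rpow_neg_one, div_neg, Pi.neg_def] using (Real.hasDerivAt_log hv.ne').neg
  simp only [if_neg h1, if_neg h0]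
  have h1' := sub_ne_zero.2 h1
  exact ((Real.hasDerivAt_rpow_const (.inl hv.ne')).div_const _).congr_deriv (by field_simp)

theorem hasDerivAt_powKernelDeriv (α : ℝ) {v : ℝ} (hv : 0 < v) :
    HasDerivAt (powKernelDeriv α) (v ^ (α - 2)) v := by
  unfold powKernelDeriv
  obtain rfl | h1 := eq_or_ne α 1
  · have hexp : v ^ (1 - 2 : ℝ) = v⁻¹ := by rw [← Real.rpow_neg_one]; norm_num
    simpa [hexp] using Real.hasDerivAt_log hv.ne'
  simp only [if_neg h1]
  have h1' := sub_ne_zero.2 h1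
  refine ((Real.hasDerivAt_rpow_const (.inl hv.ne')).div_const _).congr_deriv ?_
  rw [mul_div_cancel_left₀ _ h1', sub_sub, one_add_one_eq_two]

/-- Taylor's formula for `powKernel (β + 1)` at `exp A`, with integral remainder in logarithmic
coordinates. -/
theorem integral_hinge_exp_mul_exp (β : ℝ) {A B v : ℝ} (hv : 0 < v) (hA : A ≤ Real.log v)
    (hB : Real.log v ≤ B) :
    ∫ u in A..B, hinge (Real.exp u) v * Real.exp (β * u) =
      powKernel (β + 1) v - powKernel (β + 1) (Real.exp A) -
        powKernelDeriv (β + 1) (Real.exp A) * (v - Real.exp A) := by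
  have hcont : Continuous fun u ↦ hinge (Real.exp u) v * Real.exp (β * u) := by
    unfold hinge
    fun_prop
  have hleft : ∫ u in A..Real.log v, hinge (Real.exp u) v * Real.exp (β * u) =
      ∫ u in A..Real.log v, (v - Real.exp u) * Real.exp (β * u) :=
    intervalIntegral.integral_congr fun u hu ↦ by
      rw [Set.uIcc_of_le hA] at hu
      simp only [hinge_of_le ((Real.le_log_iff_exp_le hv).1 hu.2)]
  have hright : ∫ u in Real.log v..B, hinge (Real.exp u) v * Real.exp (β * u) = 0 := by
    refine (intervalIntegral.integral_congr (g := 0) fun u hu ↦ ?_).trans (by simp)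
    rw [Set.uIcc_of_le hB] at hu
    simp [hinge_of_ge ((Real.log_le_iff_le_exp hv).1 hu.1)]
  have hderiv (u : ℝ) : HasDerivAt
      (fun u ↦ (v - Real.exp u) * powKernelDeriv (β + 1) (Real.exp u) +
        powKernel (β + 1) (Real.exp u)) ((v - Real.exp u) * Real.exp (β * u)) u := by
    have hexp := Real.hasDerivAt_exp u
    have hK := (hasDerivAt_powKernel (β + 1) (Real.exp_pos u)).comp u hexp
    have hK' := (hasDerivAt_powKernelDeriv (β + 1) (Real.exp_pos u)).comp u hexp
    refine (((hexp.const_sub v).mul hK').add hK).congr_deriv ?_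
    have : Real.exp (β * u) = Real.exp u ^ (β + 1 - 2) * Real.exp u := by
      rw [← Real.exp_mul, ← Real.exp_add]
      ring_nf
    rw [this]
    simp only [Function.comp_apply]
    ring
  rw [← intervalIntegral.integral_add_adjacent_intervals (hcont.intervalIntegrable A (Real.log v))
    (hcont.intervalIntegrable (Real.log v) B), hleft, hright, add_zero,
    intervalIntegral.integral_eq_sub_of_hasDerivAt (fun u _ ↦ hderiv u)
      (Continuous.intervalIntegrable (by fun_prop) _ _), Real.exp_log hv]
  ring

end PowKernel

section LogHinge

open Finsupp (linearCombination)

/-- A finitely supported signed measure on the line, encoded by its point masses, is balanced if its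
total mass and its first moment vanish. -/
def IsBalanced (μ : ℝ →₀ ℝ) : Prop :=
  linearCombination ℝ (fun _ ↦ (1 : ℝ)) μ = 0 ∧ linearCombination ℝ (fun v ↦ v) μ = 0

/-- The integral of the hinge functions against `μ`, with the threshold in logarithmic
coordinates. -/
noncomputable def logHinge (μ : ℝ →₀ ℝ) (u : ℝ) : ℝ := linearCombination ℝ (hinge (Real.exp u)) μ

variable {μ : ℝ →₀ ℝ}

theorem IsBalanced.linearCombination_congr (hμ : IsBalanced μ) {f₁ f₂ : ℝ → ℝ} {a b : ℝ}
    (h : ∀ v ∈ μ.support, f₁ v = f₂ v + (a + b * v)) :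
    linearCombination ℝ f₁ μ = linearCombination ℝ f₂ μ := by
  have h₀ : ∑ v ∈ μ.support, μ v = 0 := by
    simpa [Finsupp.linearCombination_apply, Finsupp.sum] using hμ.1
  have h₁ : ∑ v ∈ μ.support, μ v * v = 0 := by
    simpa [Finsupp.linearCombination_apply, Finsupp.sum] using hμ.2
  simp only [Finsupp.linearCombination_apply, Finsupp.sum, smul_eq_mul]
  calc ∑ v ∈ μ.support, μ v * f₁ v
      = ∑ v ∈ μ.support, (μ v * f₂ v + (μ v * a + μ v * v * b)) :=
        Finset.sum_congr rfl fun v hv ↦ by rw [h v hv]; ring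
    _ = ∑ v ∈ μ.support, μ v * f₂ v := by
        rw [Finset.sum_add_distrib, Finset.sum_add_distrib, ← Finset.sum_mul, ← Finset.sum_mul,
          h₀, h₁]
        ring

theorem IsBalanced.linearCombination_hinge (hμ : IsBalanced μ) (t : ℝ) :
    linearCombination ℝ (hinge t) μ = linearCombination ℝ (fun v ↦ hinge v t) μ := by
  refine hμ.linearCombination_congr (a := -t) (b := 1) fun v _ ↦ ?_
  obtain h | h := le_total t v
  · rw [hinge_of_le h, hinge_of_ge h]
    ring
  · rw [hinge_of_le h, hinge_of_ge h]
    ring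

theorem linearCombination_eq_zero_of_forall_mem_support {f : ℝ → ℝ}
    (h : ∀ v ∈ μ.support, f v = 0) : linearCombination ℝ f μ = 0 :=
  Finset.sum_eq_zero fun v hv ↦ by simp [h v hv]

theorem linearCombination_eq_mul_of_forall_mem_support {f : ℝ → ℝ} {M : ℝ} (hM : M ∈ μ.support)
    (h : ∀ v ∈ μ.support, v ≠ M → f v = 0) : linearCombination ℝ f μ = μ M * f M :=
  Finset.sum_eq_single_of_mem M hM fun v hv hvM ↦ by simp [h v hv hvM]

theorem continuous_logHinge (μ : ℝ →₀ ℝ) : Continuous (logHinge μ) := by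
  unfold logHinge hinge
  simp only [Finsupp.linearCombination_apply, Finsupp.sum]
  fun_prop

theorem IsBalanced.exists_support_logHinge_subset (hμ : IsBalanced μ)
    (hpos : ∀ v ∈ μ.support, 0 < v) :
    ∃ A B, (∀ v ∈ μ.support, A ≤ Real.log v ∧ Real.log v ≤ B) ∧
      Function.support (logHinge μ) ⊆ Set.Ioc A B := by
  obtain ⟨A, hA⟩ := (μ.support.image Real.log).bddBelow
  obtain ⟨B, hB⟩ := (μ.support.image Real.log).bddAbove
  replace hA (v : ℝ) (hv : v ∈ μ.support) : A ≤ Real.log v := hA (Finset.mem_image_of_mem _ hv)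
  replace hB (v : ℝ) (hv : v ∈ μ.support) : Real.log v ≤ B := hB (Finset.mem_image_of_mem _ hv)
  refine ⟨A, B, fun v hv ↦ ⟨hA v hv, hB v hv⟩, fun u hu ↦ ⟨?_, ?_⟩⟩ <;> by_contra! h <;>
    refine hu ?_
  · rw [logHinge, hμ.linearCombination_hinge]
    exact linearCombination_eq_zero_of_forall_mem_support fun v hv ↦
      hinge_of_ge ((Real.le_log_iff_exp_le (hpos v hv)).1 (h.trans (hA v hv)))
  · exact linearCombination_eq_zero_of_forall_mem_support fun v hv ↦
      hinge_of_ge ((Real.log_le_iff_le_exp (hpos v hv)).1 ((hB v hv).trans h.le))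

theorem IsBalanced.hasCompactSupport_logHinge (hμ : IsBalanced μ)
    (hpos : ∀ v ∈ μ.support, 0 < v) : HasCompactSupport (logHinge μ) := by
  obtain ⟨A, B, -, hsupp⟩ := hμ.exists_support_logHinge_subset hpos
  exact .of_support_subset_isCompact isCompact_Icc (hsupp.trans Set.Ioc_subset_Icc_self)

theorem IsBalanced.bilateralLaplace_logHinge (hμ : IsBalanced μ)
    (hpos : ∀ v ∈ μ.support, 0 < v) (β : ℝ) :
    bilateralLaplace (logHinge μ) β = linearCombination ℝ (powKernel (β + 1)) μ := by
  obtain ⟨A, B, hAB, hsupp⟩ := hμ.exists_support_logHinge_subset hpos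
  calc bilateralLaplace (logHinge μ) β
      = ∫ u in A..B, logHinge μ u * Real.exp (β * u) :=
        (intervalIntegral.integral_eq_integral_of_support_subset
          ((Function.support_mul_subset_left _ _).trans hsupp)).symm
    _ = linearCombination ℝ
          (fun v ↦ ∫ u in A..B, hinge (Real.exp u) v * Real.exp (β * u)) μ := by
        simp only [logHinge, hinge, Finsupp.linearCombination_apply, Finsupp.sum, smul_eq_mul,
          Finset.sum_mul, mul_assoc]
        rw [intervalIntegral.integral_finsetSum
          fun v _ ↦ Continuous.intervalIntegrable (by fun_prop) _ _]
        simp only [intervalIntegral.integral_const_mul]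
    _ = linearCombination ℝ (powKernel (β + 1)) μ := by
        refine hμ.linearCombination_congr
          (a := powKernelDeriv (β + 1) (Real.exp A) * Real.exp A - powKernel (β + 1) (Real.exp A))
          (b := -powKernelDeriv (β + 1) (Real.exp A)) fun v hv ↦ ?_
        rw [integral_hinge_exp_mul_exp β (hpos v hv) (hAB v hv).1 (hAB v hv).2]
        ring

theorem eventually_linearCombination_hinge_eq_right (hμ : μ ≠ 0) :
    ∃ M ∈ μ.support, ∀ᶠ b in 𝓝[<] M, ∀ t ≥ b,
      linearCombination ℝ (hinge t) μ = μ M * hinge t M := by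
  obtain ⟨M, hM, hmax⟩ := μ.support.exists_max_image id (Finsupp.support_nonempty_iff.2 hμ)
  refine ⟨M, hM, ?_⟩
  have hb : ∀ᶠ b in 𝓝[<] M, ∀ v ∈ μ.support.erase M, v ≤ b :=
    (Finset.eventually_all _).2 fun v hv ↦ eventually_nhdsWithin_of_eventually_nhds
      (eventually_ge_nhds
        ((hmax v (Finset.mem_of_mem_erase hv)).lt_of_ne (Finset.ne_of_mem_erase hv)))
  filter_upwards [hb] with b hb t ht
  exact linearCombination_eq_mul_of_forall_mem_support hM fun v hv hvM ↦
    hinge_of_ge ((hb v (Finset.mem_erase.2 ⟨hvM, hv⟩)).trans ht)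

theorem IsBalanced.eventually_linearCombination_hinge_eq_left (hbal : IsBalanced μ) (hμ : μ ≠ 0) :
    ∃ m ∈ μ.support, ∀ᶠ a in 𝓝[>] m, ∀ t ≤ a,
      linearCombination ℝ (hinge t) μ = μ m * hinge m t := by
  obtain ⟨m, hm, hmin⟩ := μ.support.exists_min_image id (Finsupp.support_nonempty_iff.2 hμ)
  refine ⟨m, hm, ?_⟩
  have ha : ∀ᶠ a in 𝓝[>] m, ∀ v ∈ μ.support.erase m, a ≤ v :=
    (Finset.eventually_all _).2 fun v hv ↦ eventually_nhdsWithin_of_eventually_nhds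
      (eventually_le_nhds
        ((hmin v (Finset.mem_of_mem_erase hv)).lt_of_ne (Finset.ne_of_mem_erase hv).symm))
  filter_upwards [ha] with a ha t ht
  rw [hbal.linearCombination_hinge]
  exact linearCombination_eq_mul_of_forall_mem_support hm fun v hv hvm ↦
    hinge_of_ge (ht.trans (ha v (Finset.mem_erase.2 ⟨hvm, hv⟩)))

theorem hasPosRightTail_or_neg_of_eq_mul {g f : ℝ → ℝ} {b w : ℝ} (hw : w ≠ 0)
    (hf : ∀ u, 0 ≤ f u) (hf_pos : ∃ u, b < u ∧ 0 < f u) (hg : ∀ u ≥ b, g u = w * f u) :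
    HasPosRightTail g ∨ HasPosRightTail (-g) := by
  obtain ⟨u, hu, hfu⟩ := hf_pos
  obtain hw | hw := hw.lt_or_gt
  · refine .inr ⟨b, fun u hu ↦ ?_, u, hu, ?_⟩
    · rw [Pi.neg_apply, hg u hu, ← neg_mul]
      exact mul_nonneg (neg_pos.2 hw).le (hf u)
    · rw [Pi.neg_apply, hg u hu.le, ← neg_mul]
      exact mul_pos (neg_pos.2 hw) hfu
  · refine .inl ⟨b, fun u hu ↦ ?_, u, hu, ?_⟩
    · rw [hg u hu]
      exact mul_nonneg hw.le (hf u)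
    · rw [hg u hu.le]
      exact mul_pos hw hfu

theorem hasPosRightTail_logHinge_or_neg (hμ : μ ≠ 0) (hpos : ∀ v ∈ μ.support, 0 < v) :
    HasPosRightTail (logHinge μ) ∨ HasPosRightTail (-logHinge μ) := by
  obtain ⟨M, hM, hev⟩ := eventually_linearCombination_hinge_eq_right hμ
  obtain ⟨b, hb, hb_pos, hbM⟩ := (hev.and ((eventually_nhdsWithin_of_eventually_nhds
    (eventually_gt_nhds (hpos M hM))).and self_mem_nhdsWithin)).exists
  obtain ⟨t, hbt, htM⟩ := exists_between hbM
  have ht : 0 < t := hb_pos.trans hbt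
  refine hasPosRightTail_or_neg_of_eq_mul (b := Real.log b) (Finsupp.mem_support_iff.1 hM)
    (fun u ↦ hinge_nonneg (Real.exp u) M) ⟨Real.log t, Real.log_lt_log hb_pos hbt, ?_⟩
    fun u hu ↦ hb _ ((Real.log_le_iff_le_exp hb_pos).1 hu)
  rw [Real.exp_log ht, hinge_of_le htM.le]
  exact sub_pos.2 htM

theorem IsBalanced.hasPosRightTail_logHinge_comp_neg_or_neg (hbal : IsBalanced μ) (hμ : μ ≠ 0)
    (hpos : ∀ v ∈ μ.support, 0 < v) :
    HasPosRightTail (fun u ↦ logHinge μ (-u)) ∨ HasPosRightTail (-fun u ↦ logHinge μ (-u)) := by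
  obtain ⟨m, hm, hev⟩ := hbal.eventually_linearCombination_hinge_eq_left hμ
  obtain ⟨a, ha, hma⟩ := (hev.and self_mem_nhdsWithin).exists
  obtain ⟨t, hmt, hta⟩ := exists_between hma
  have ht : 0 < t := (hpos m hm).trans hmt
  refine hasPosRightTail_or_neg_of_eq_mul (b := -Real.log a) (Finsupp.mem_support_iff.1 hm)
    (fun u ↦ hinge_nonneg m (Real.exp (-u)))
    ⟨-Real.log t, neg_lt_neg (Real.log_lt_log ht hta), ?_⟩
    fun u hu ↦ ha _ ((Real.le_log_iff_exp_le (ht.trans hta)).1 (neg_le.1 hu))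
  rw [neg_neg, Real.exp_log ht, hinge_of_le hmt.le]
  exact sub_pos.2 hmt

theorem hasPosRightTail_of_bilateralLaplace_pos {g : ℝ → ℝ} (hg : Continuous g)
    (hgs : HasCompactSupport g) (hpos : ∀ β, 0 < bilateralLaplace g β)
    (h : HasPosRightTail g ∨ HasPosRightTail (-g)) : HasPosRightTail g := by
  refine h.resolve_right fun h ↦ ?_
  obtain ⟨γ, hγ⟩ := h.exists_bilateralLaplace_pos hg.neg hgs.neg
  rw [bilateralLaplace_neg] at hγ
  exact (neg_pos.1 hγ).not_gt (hpos γ)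

theorem IsBalanced.exists_bilateralLaplace_logHinge_ne_zero (hbal : IsBalanced μ) (hμ : μ ≠ 0)
    (hpos : ∀ v ∈ μ.support, 0 < v) : ∃ β, bilateralLaplace (logHinge μ) β ≠ 0 := by
  have hg := continuous_logHinge μ
  have hgs := hbal.hasCompactSupport_logHinge hpos
  obtain h | h := hasPosRightTail_logHinge_or_neg hμ hpos
  · exact (h.exists_bilateralLaplace_pos hg hgs).imp fun _ ↦ ne_of_gt
  · obtain ⟨γ, hγ⟩ := h.exists_bilateralLaplace_pos hg.neg hgs.neg
    rw [bilateralLaplace_neg] at hγ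
    exact ⟨γ, (neg_pos.1 hγ).ne⟩

theorem IsBalanced.eventually_latticeSum_logHinge_mul_exp_pos (hbal : IsBalanced μ) (hμ : μ ≠ 0)
    (hpos : ∀ v ∈ μ.support, 0 < v) (hL : ∀ β, 0 < bilateralLaplace (logHinge μ) β) :
    ∀ᶠ ε in 𝓝[>] 0, ∀ β s, 0 < latticeSum (fun u ↦ logHinge μ u * Real.exp (β * u)) ε s := by
  have hg := continuous_logHinge μ
  have hgs := hbal.hasCompactSupport_logHinge hpos
  refine eventually_forall_latticeSum_mul_exp_pos hg hgs
    (hasPosRightTail_of_bilateralLaplace_pos hg hgs hL (hasPosRightTail_logHinge_or_neg hμ hpos))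
    (hasPosRightTail_of_bilateralLaplace_pos (by fun_prop)
      (hgs.comp_homeomorph (Homeomorph.neg ℝ)) (fun β ↦ ?_)
      (hbal.hasPosRightTail_logHinge_comp_neg_or_neg hμ hpos)) hL
  rw [bilateralLaplace_comp_neg]
  exact hL (-β)

end LogHinge

section BinomialSmoothing

open Finset

theorem eventually_sum_choose_mul_exp_nonneg {g : ℝ → ℝ} (hgs : HasCompactSupport g) {ε s : ℝ}
    (hε : 0 < ε) (hpos : ∀ β, 0 < latticeSum (fun u ↦ g u * Real.exp (β * u)) ε s) :
    ∀ᶠ N : ℕ in atTop, ∀ m : ℤ,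
      0 ≤ ∑ l ∈ range (N + 1), N.choose l * (Real.exp (l * ε) * g (s + (m - l) * ε)) := by
  set a : ℤ → ℝ := fun k ↦ g (s + k * ε) * Real.exp (-(k * ε))
  have ha : a.support.Finite :=
    (finite_support_comp_lattice hgs hε.ne' s).subset (Function.support_mul_subset_left _ _)
  have ha_pos (z : ℝ) (hz : 0 < z) : 0 < ∑' k : ℤ, a k * z ^ k := by
    set β := Real.log z / ε - 1
    have hterm (k : ℤ) : a k * z ^ k =
        Real.exp (-(β * s)) * (g (s + k * ε) * Real.exp (β * (s + k * ε))) := by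
      have hzk : z ^ k = Real.exp (k * Real.log z) := by
        rw [← Real.rpow_intCast, Real.rpow_def_of_pos hz, mul_comm]
      have hlog : Real.log z = (β + 1) * ε := by
        simp only [β]
        field_simp
        ring
      simp only [a]
      rw [hzk, hlog, mul_assoc, mul_left_comm (Real.exp _), ← Real.exp_add, ← Real.exp_add]
      ring_nf
    rw [tsum_congr hterm, tsum_mul_left]
    exact mul_pos (Real.exp_pos _) (hpos β)
  filter_upwards [eventually_sum_choose_mul_nonneg ha ha_pos] with N hN m
  have hsum : ∑ l ∈ range (N + 1), N.choose l * (Real.exp (l * ε) * g (s + (m - l) * ε)) =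
      Real.exp (m * ε) * ∑ l ∈ range (N + 1), N.choose l * a (m - l) := by
    rw [mul_sum]
    refine sum_congr rfl fun l _ ↦ ?_
    have : Real.exp (l * ε) = Real.exp (m * ε) * Real.exp (-((m - l) * ε)) := by
      rw [← Real.exp_add]
      ring_nf
    rw [this]
    simp only [a, Int.cast_sub, Int.cast_natCast]
    ring
  rw [hsum]
  exact mul_nonneg (Real.exp_nonneg _) (hN m)

end BinomialSmoothing

section Trumping

open Finset
open Finsupp (linearCombination)

variable {ι : Type*} [Fintype ι] {x y : ι → ℝ}

/-- The counting measure of the entries of `y` minus that of the entries of `x`. -/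
noncomputable def entryDiff (x y : ι → ℝ) : ℝ →₀ ℝ :=
  ∑ i, Finsupp.single (y i) 1 - ∑ i, Finsupp.single (x i) 1

theorem linearCombination_entryDiff (f : ℝ → ℝ) (x y : ι → ℝ) :
    linearCombination ℝ f (entryDiff x y) = ∑ i, f (y i) - ∑ i, f (x i) := by
  simp [entryDiff]

theorem isBalanced_entryDiff (hsum : ∑ i, x i = ∑ i, y i) : IsBalanced (entryDiff x y) := by
  constructor <;> simp [linearCombination_entryDiff, hsum]

theorem pos_of_mem_support_entryDiff (hx : ∀ i, 0 < x i) (hy : ∀ i, 0 < y i) {v : ℝ}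
    (hv : v ∈ (entryDiff x y).support) : 0 < v := by
  by_contra! hv'
  refine Finsupp.mem_support_iff.1 hv ?_
  simp [entryDiff, (hv'.trans_lt (hx _)).ne', (hv'.trans_lt (hy _)).ne']

theorem entryDiff_ne_zero (hne : ¬ ∃ σ : Equiv.Perm ι, x = y ∘ σ) : entryDiff x y ≠ 0 := by
  contrapose! hne
  have hcard (v : ℝ) : #{i | x i = v} = #{i | y i = v} := by
    have := linearCombination_entryDiff (fun w ↦ if w = v then 1 else 0) x y
    simp only [hne, map_zero, sum_boole] at this
    exact_mod_cast (sub_eq_zero.1 this.symm).symm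
  have e (v : ℝ) : {i // x i = v} ≃ {i // y i = v} :=
    Fintype.equivOfCardEq (by rw [Fintype.card_subtype, Fintype.card_subtype, hcard])
  exact ⟨Equiv.ofFiberEquiv e, funext fun i ↦ (Equiv.ofFiberEquiv_map e i).symm⟩

theorem fAlpha_lt_fAlpha_iff [Nonempty ι] (hx : ∀ i, 0 < x i) (hy : ∀ i, 0 < y i) (α : ℝ) :
    fAlpha α x < fAlpha α y ↔ ∑ i, powKernel α (x i) < ∑ i, powKernel α (y i) := by
  have hsx : 0 < ∑ i, x i ^ α := sum_pos (fun i _ ↦ Real.rpow_pos_of_pos (hx i) α) univ_nonempty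
  have hsy : 0 < ∑ i, y i ^ α := sum_pos (fun i _ ↦ Real.rpow_pos_of_pos (hy i) α) univ_nonempty
  unfold fAlpha powKernel
  obtain h1 | rfl | h1 := lt_trichotomy α 1
  · simp only [if_neg h1.not_gt, if_neg h1.ne]
    obtain h0 | rfl | h0 := lt_trichotomy α 0
    · simp only [if_neg h0.not_gt, if_neg h0.ne, ← sum_div]
      rw [Real.log_lt_log_iff hsx hsy, div_lt_div_iff_of_pos_right (by nlinarith)]
    · simp
    · simp only [if_pos h0, if_neg h0.ne', ← sum_div]
      rw [neg_lt_neg_iff, Real.log_lt_log_iff hsy hsx, div_lt_div_right_of_neg (by nlinarith)]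
  · simp
  · have h0 : 0 < α := by linarith
    simp only [if_pos h1, if_neg h1.ne', if_neg h0.ne', ← sum_div]
    rw [Real.log_lt_log_iff hsx hsy, div_lt_div_iff_of_pos_right (by nlinarith)]

theorem forall_fAlpha_lt_iff_forall_bilateralLaplace_pos [Nonempty ι] (hx : ∀ i, 0 < x i)
    (hy : ∀ i, 0 < y i) (hsum : ∑ i, x i = ∑ i, y i) :
    (∀ α, fAlpha α x < fAlpha α y) ↔ ∀ β, 0 < bilateralLaplace (logHinge (entryDiff x y)) β := by
  have hlaplace := (isBalanced_entryDiff hsum).bilateralLaplace_logHinge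
    fun _ ↦ pos_of_mem_support_entryDiff hx hy
  simp only [fAlpha_lt_fAlpha_iff hx hy, hlaplace, linearCombination_entryDiff, sub_pos]
  exact ⟨fun h β ↦ h (β + 1), fun h α ↦ by simpa using h (α - 1)⟩

variable {κ : Type*} [Fintype κ] {c : κ → ℝ}

theorem hinge_exp_mul {c : ℝ} (hc : 0 ≤ c) (u v : ℝ) :
    hinge (Real.exp u) (v * c) = c * hinge (Real.exp (u - Real.log c)) v := by
  obtain rfl | hc := hc.eq_or_lt
  · simp [hinge_of_ge (Real.exp_nonneg u)]
  · rw [hinge, hinge, mul_max_of_nonneg _ _ hc.le, mul_zero, Real.exp_sub, Real.exp_log hc, mul_sub,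
      mul_div_cancel₀ _ hc.ne', mul_comm v]

theorem sum_hinge_exp_pvTensor_sub (hc : ∀ j, 0 ≤ c j) (u : ℝ) :
    ∑ p, hinge (Real.exp u) (pvTensor y c p) - ∑ p, hinge (Real.exp u) (pvTensor x c p) =
      ∑ j, c j * logHinge (entryDiff x y) (u - Real.log (c j)) := by
  simp only [Fintype.sum_prod_type_right, pvTensor, hinge_exp_mul (hc _), logHinge,
    linearCombination_entryDiff, mul_sub, mul_sum, sum_sub_distrib]

theorem bilateralLaplace_logHinge_pos_of_pMaj [DecidableEq ι] [DecidableEq κ] (hx : ∀ i, 0 < x i)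
    (hy : ∀ i, 0 < y i) (hsum : ∑ i, x i = ∑ i, y i)
    (hne : ¬ ∃ σ : Equiv.Perm ι, x = y ∘ σ) (hc : ∀ j, 0 ≤ c j) (hc_pos : 0 < ∑ j, c j)
    (h : PMaj (pvTensor x c) (pvTensor y c)) (β : ℝ) :
    0 < bilateralLaplace (logHinge (entryDiff x y)) β := by
  have hbal := isBalanced_entryDiff hsum
  have hpos (v : ℝ) (hv : v ∈ (entryDiff x y).support) : 0 < v :=
    pos_of_mem_support_entryDiff hx hy hv
  refine bilateralLaplace_pos_of_sum_mul_comp_sub_nonneg (continuous_logHinge _)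
    (hbal.hasCompactSupport_logHinge hpos)
    (hbal.exists_bilateralLaplace_logHinge_ne_zero (entryDiff_ne_zero hne) hpos)
    (s := univ) (a := c) (τ := fun j ↦ Real.log (c j)) (fun j _ ↦ hc j) hc_pos (fun u ↦ ?_) β
  rw [← sum_hinge_exp_pvTensor_sub hc, sub_nonneg]
  exact h.sum_hinge_le (Real.exp_nonneg u)

theorem pMaj_pvTensor_of_sum_mul_logHinge_nonneg [DecidableEq ι] [DecidableEq κ]
    (hx : ∀ i, 0 < x i) (hy : ∀ i, 0 < y i) (hsum : ∑ i, x i = ∑ i, y i) (hc : ∀ j, 0 < c j)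
    (h : ∀ i j, 0 ≤ ∑ l, c l *
      logHinge (entryDiff x y) (Real.log (y i) + (Real.log (c j) - Real.log (c l)))) :
    PMaj (pvTensor x c) (pvTensor y c) := by
  refine pMaj_of_sum_hinge_le (fun p ↦ (mul_pos (hx _) (hc _)).le)
    (fun p ↦ (mul_pos (hy _) (hc _)).le) ?_ ?_
  · simp only [pvTensor, Fintype.sum_prod_type, ← mul_sum, ← sum_mul, hsum]
  · rintro ⟨i, j⟩
    have hexp : pvTensor y c (i, j) = Real.exp (Real.log (y i) + Real.log (c j)) := by
      rw [Real.exp_add, Real.exp_log (hy i), Real.exp_log (hc j), pvTensor]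
    rw [hexp, ← sub_nonneg, sum_hinge_exp_pvTensor_sub fun j ↦ (hc j).le]
    simpa only [add_sub_assoc] using h i j

theorem exists_isProbVec_pMaj_of_sum_mul_logHinge_nonneg [DecidableEq ι] [Nonempty κ]
    (hx : ∀ i, 0 < x i) (hy : ∀ i, 0 < y i) (hsum : ∑ i, x i = ∑ i, y i) (hc : ∀ j, 0 < c j)
    (h : ∀ i j, 0 ≤ ∑ l, c l *
      logHinge (entryDiff x y) (Real.log (y i) + (Real.log (c j) - Real.log (c l)))) :
    ∃ (k : ℕ) (c : Fin k → ℝ), IsProbVec c ∧ PMaj (pvTensor x c) (pvTensor y c) := by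
  set e := (Fintype.equivFin κ).symm
  set Z := ∑ l, c l
  have hZ : 0 < Z := sum_pos (fun l _ ↦ hc l) univ_nonempty
  have hcZ (l : κ) : 0 < c l / Z := div_pos (hc l) hZ
  refine ⟨_, fun j ↦ c (e j) / Z, ⟨fun j ↦ (hcZ _).le, ?_⟩,
    pMaj_pvTensor_of_sum_mul_logHinge_nonneg hx hy hsum (fun j ↦ hcZ _) fun i j ↦ ?_⟩
  · rw [e.sum_comp fun l ↦ c l / Z, ← sum_div, div_self hZ.ne']
  · rw [e.sum_comp fun l ↦ c l / Z * logHinge (entryDiff x y)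
      (Real.log (y i) + (Real.log (c (e j) / Z) - Real.log (c l / Z)))]
    simp only [Real.log_div (hc _).ne' hZ.ne', sub_sub_sub_cancel_right, div_mul_eq_mul_div,
      ← sum_div]
    exact div_nonneg (h i (e j)) hZ.le

theorem exists_isProbVec_pMaj_of_bilateralLaplace_pos [DecidableEq ι] (hx : ∀ i, 0 < x i)
    (hy : ∀ i, 0 < y i) (hsum : ∑ i, x i = ∑ i, y i) (hne : ¬ ∃ σ : Equiv.Perm ι, x = y ∘ σ)
    (hL : ∀ β, 0 < bilateralLaplace (logHinge (entryDiff x y)) β) :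
    ∃ (k : ℕ) (c : Fin k → ℝ), IsProbVec c ∧ PMaj (pvTensor x c) (pvTensor y c) := by
  have hbal := isBalanced_entryDiff hsum
  have hpos (v : ℝ) (hv : v ∈ (entryDiff x y).support) : 0 < v :=
    pos_of_mem_support_entryDiff hx hy hv
  obtain ⟨ε, hlattice, hε⟩ := ((hbal.eventually_latticeSum_logHinge_mul_exp_pos
    (entryDiff_ne_zero hne) hpos hL).and self_mem_nhdsWithin).exists
  obtain ⟨N, hN⟩ := (eventually_all.2 fun i ↦ eventually_sum_choose_mul_exp_nonneg
    (hbal.hasCompactSupport_logHinge hpos) hε (s := Real.log (y i)) fun β ↦ hlattice β _).exists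
  -- Up to normalization this is the `N`-th tensor power of `(1, exp ε)`: indexing its entries by
  -- subsets makes `exp (l * ε)` occur `N.choose l` times.
  refine exists_isProbVec_pMaj_of_sum_mul_logHinge_nonneg (κ := Finset (Fin N))
    (c := fun T ↦ Real.exp (#T * ε)) hx hy hsum (fun _ ↦ Real.exp_pos _) fun i T ↦ ?_
  simp only [Real.log_exp, ← sub_mul]
  rw [← powerset_univ, sum_powerset_apply_card fun l ↦ Real.exp (l * ε) *
    logHinge (entryDiff x y) (Real.log (y i) + (#T - l) * ε)]
  simpa using hN i #T

theorem trumping_iff_fAlpha_general [DecidableEq ι] (x y : ι → ℝ) (hsum : ∑ i, x i = ∑ i, y i)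
    (hxpos : ∀ i, 0 < x i) (hypos : ∀ i, 0 < y i) (hne : ¬ ∃ σ : Equiv.Perm ι, x = y ∘ σ) :
    (∃ (k : ℕ) (c : Fin k → ℝ), IsProbVec c ∧ PMaj (pvTensor x c) (pvTensor y c)) ↔
      ∀ α : ℝ, fAlpha α x < fAlpha α y := by
  have : Nonempty ι := not_isEmpty_iff.1 fun _ ↦ hne ⟨1, Subsingleton.elim _ _⟩
  rw [forall_fAlpha_lt_iff_forall_bilateralLaplace_pos hxpos hypos hsum]
  constructor
  · rintro ⟨k, c, hc, h⟩
    exact bilateralLaplace_logHinge_pos_of_pMaj hxpos hypos hsum hne hc.1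
      (hc.2.symm ▸ one_pos) h
  · exact exists_isProbVec_pMaj_of_bilateralLaplace_pos hxpos hypos hsum hne

end Trumping

/-- Turgut–Klimesh characterization of the trumping relation: for probability vectors
`x, y` of dimension `d ≥ 2` with strictly positive entries whose nonincreasing
rearrangements differ, there is a catalyst `c` with `x ⊗ c ≺ y ⊗ c` iff
`f_α(y) > f_α(x)` for all real `α`. -/
theorem trumping_iff_fAlpha {d : ℕ} (hd : 2 ≤ d) (x y : Fin d → ℝ)
    (hx : IsProbVec x) (hy : IsProbVec y)
    (hxpos : ∀ i, 0 < x i) (hypos : ∀ i, 0 < y i)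
    (hne : ¬ ∃ σ : Equiv.Perm (Fin d), x = y ∘ σ) :
    (∃ (k : ℕ) (c : Fin k → ℝ), IsProbVec c ∧ PMaj (pvTensor x c) (pvTensor y c)) ↔
      (∀ α : ℝ, fAlpha α x < fAlpha α y) :=
  trumping_iff_fAlpha_general x y (hx.2.trans hy.2.symm) hxpos hypos hne
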